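/- Let ℓ be a permutation invariant loss function such that the unique risk allocation RA(X) exists for every X ∈ M^θ (i.e., there is exactly one m ∈ A(X) with ∑_k m_k = R(X)). Then (a) RA(X + r) = RA(X) + r for every X ∈ M^θ and every constant vector r ∈ ℝ^d; and (b) if ℓ is additionally positively homogeneous (ℓ(tx) = t·ℓ(x) for t > 0), then RA(λX) = λ·RA(X) for every X ∈ M^θ and every λ > 0. -/

import Mathlib

/-!
The acceptance set satisfies `A(X + r) = A(X) + r` and, for positively homogeneous `ℓ`,
`A(λX) = λ A(X)`. Hence the risk satisfies `R(X + r) = R(X) + ∑ r` and `R(λX) = λ R(X)`, so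
`m' - r` (respectively `λ⁻¹ m'`) is a risk allocation of `X` and uniqueness for `X` identifies it
with `m`.

Since `sInf` is a junk value on sets that are not bounded below, the translation rule for `R` needs
`{∑ₖ mₖ : m ∈ A(X)}` to be bounded below. The lower bound on `ℓ` gives this: it makes every
`X ∈ M^θ` integrable, and then `∑ₖ E[Xₖ] - c ≤ ∑ₖ mₖ` for every `m ∈ A(X)`.
-/

open MeasureTheory ENNReal Pointwise

/-- The positive part of an extended real number, valued in `ℝ≥0∞`. -/
noncomputable def ERealPos (e : EReal) : ℝ≥0∞ := (max e 0).abs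

/-- Extended expectation of a `(-∞,∞]`-valued integrand, as an extended real. -/
noncomputable def eexp {Ω : Type*} [MeasurableSpace Ω] (P : Measure Ω)
    (g : Ω → EReal) : EReal :=
  ((∫⁻ ω, ERealPos (g ω) ∂P) : EReal) - ((∫⁻ ω, ERealPos (-(g ω)) ∂P) : EReal)

/-- A loss function `ℓ : ℝ^d → (-∞,∞]` with constant `c` as in (A3):
(A1) increasing, (A2) convex, lower semicontinuous with `inf ℓ < 0`,
(A3) `ℓ x ≥ ∑ₖ xₖ - c`. -/
structure IsLossFunction {d : ℕ} (ℓ : (Fin d → ℝ) → EReal) (c : ℝ) : Prop where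
  mono : Monotone ℓ
  convex : ∀ x y : Fin d → ℝ, ∀ a b : ℝ, 0 ≤ a → 0 ≤ b → a + b = 1 →
    ℓ (a • x + b • y) ≤ (a : EReal) * ℓ x + (b : EReal) * ℓ y
  lsc : LowerSemicontinuous ℓ
  inf_lt_zero : (⨅ x, ℓ x) < 0
  lower_bound : ∀ x, ((∑ k, x k : ℝ) : EReal) - (c : EReal) ≤ ℓ x

/-- Membership in the Orlicz heart `M^θ` where `θ x = ℓ |x|`:
`X` is measurable and `E[θ(λX)] < ∞` for all `λ > 0`. -/
def MemOrliczHeart {Ω : Type*} [MeasurableSpace Ω] {d : ℕ}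
    (ℓ : (Fin d → ℝ) → EReal) (P : Measure Ω) (X : Ω → Fin d → ℝ) : Prop :=
  Measurable X ∧ ∀ lam : ℝ, 0 < lam → eexp P (fun ω => ℓ |lam • X ω|) < ⊤

/-- The acceptance set `A(X) = {m : E[ℓ(X - m)] ≤ 0}`. -/
def acceptSet {Ω : Type*} [MeasurableSpace Ω] {d : ℕ}
    (ℓ : (Fin d → ℝ) → EReal) (P : Measure Ω) (X : Ω → Fin d → ℝ) : Set (Fin d → ℝ) :=
  {m | eexp P (fun ω => ℓ (X ω - m)) ≤ 0}

/-- The multivariate shortfall risk `R(X) = inf {∑ₖ mₖ : m ∈ A(X)}`. -/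
noncomputable def shortfallRisk {Ω : Type*} [MeasurableSpace Ω] {d : ℕ}
    (ℓ : (Fin d → ℝ) → EReal) (P : Measure Ω) (X : Ω → Fin d → ℝ) : ℝ :=
  sInf {s : ℝ | ∃ m ∈ acceptSet ℓ P X, s = ∑ k, m k}

lemma ERealPos_coe (x : ℝ) : ERealPos (x : EReal) = ENNReal.ofReal x := by
  have h : max (x : EReal) 0 = ((max x 0 : ℝ) : EReal) := by
    exact (EReal.coe_strictMono.monotone.map_max (a := x) (b := 0)).symm
  rw [ERealPos, h, EReal.abs_def, abs_of_nonneg (le_max_right _ _)]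
  rcases le_total x 0 with hx | hx
  · rw [max_eq_right hx, ENNReal.ofReal_of_nonpos hx, ENNReal.ofReal_zero]
  · rw [max_eq_left hx]

lemma ERealPos_top : ERealPos ⊤ = ⊤ := by simp [ERealPos]

lemma ERealPos_bot : ERealPos ⊥ = 0 := by simp [ERealPos]

lemma ERealPos_mono : Monotone ERealPos := by
  intro a b hab
  induction a with
  | bot => simp [ERealPos_bot]
  | top => rw [top_le_iff.mp hab]
  | coe a =>
    induction b with
    | bot => simp at hab
    | top => simp [ERealPos_top]
    | coe b =>
      rw [ERealPos_coe, ERealPos_coe]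
      exact ENNReal.ofReal_le_ofReal (by exact_mod_cast hab)

lemma ERealPos_mul {t : ℝ} (ht : 0 < t) (e : EReal) :
    ERealPos ((t : EReal) * e) = ENNReal.ofReal t * ERealPos e := by
  induction e with
  | bot => rw [EReal.coe_mul_bot_of_pos ht, ERealPos_bot, mul_zero]
  | top =>
    rw [EReal.coe_mul_top_of_pos ht, ERealPos_top, ENNReal.mul_top (by simpa using ht)]
  | coe x =>
    rw [← EReal.coe_mul, ERealPos_coe, ERealPos_coe, ENNReal.ofReal_mul ht.le]

section

variable {Ω : Type*} [MeasurableSpace Ω] {P : Measure Ω} {d : ℕ} {ℓ : (Fin d → ℝ) → EReal}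
  {c : ℝ} {X : Ω → Fin d → ℝ}

/-- The equivalence also holds when both integrals are infinite, because `⊤ - ⊤ = ⊥` in
`EReal`. -/
lemma eexp_nonpos_iff (g : Ω → EReal) :
    eexp P g ≤ 0 ↔ ∫⁻ ω, ERealPos (g ω) ∂P ≤ ∫⁻ ω, ERealPos (-(g ω)) ∂P := by
  rw [eexp, EReal.sub_nonpos]
  exact EReal.coe_ennreal_le_coe_ennreal_iff

lemma eexp_mul_nonpos_iff {t : ℝ} (ht : 0 < t) (g : Ω → EReal) :
    eexp P (fun ω => (t : EReal) * g ω) ≤ 0 ↔ eexp P g ≤ 0 := by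
  have ht0 : ENNReal.ofReal t ≠ 0 := by simpa using ht
  simp only [eexp_nonpos_iff, ← mul_neg, ERealPos_mul ht]
  rw [lintegral_const_mul' _ _ ENNReal.ofReal_ne_top,
    lintegral_const_mul' _ _ ENNReal.ofReal_ne_top,
    ENNReal.mul_le_mul_iff_right ht0 ENNReal.ofReal_ne_top]

/-- The bound `ℓ x ≥ ∑ₖ xₖ - c` at `|X|` dominates each `|Xₖ|` by the integrable positive part of
`ℓ(|X|)` plus a constant. -/
lemma MemOrliczHeart.integrable [IsProbabilityMeasure P] (hℓ : IsLossFunction ℓ c)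
    (hX : MemOrliczHeart ℓ P X) (k : Fin d) : Integrable (fun ω => X ω k) P := by
  obtain ⟨hm, h⟩ := hX
  have h1 := h 1 one_pos
  simp only [one_smul] at h1
  have hlow : ∀ ω, ((∑ k, |X ω k| - c : ℝ) : EReal) ≤ ℓ |X ω| := fun ω => by
    rw [EReal.coe_sub]; exact hℓ.lower_bound |X ω|
  have hneg : ∫⁻ ω, ERealPos (-(ℓ |X ω|)) ∂P ≤ ENNReal.ofReal c := by
    calc _ ≤ ∫⁻ _, ENNReal.ofReal c ∂P := by
          refine lintegral_mono fun ω => ?_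
          have hs : 0 ≤ ∑ k, |X ω k| := Finset.sum_nonneg fun k _ => abs_nonneg _
          have hle : -(ℓ |X ω|) ≤ ((c : ℝ) : EReal) := by
            refine (EReal.neg_le_neg_iff.mpr (hlow ω)).trans ?_
            rw [← EReal.coe_neg]
            exact_mod_cast (by linarith : -(∑ k, |X ω k| - c) ≤ c)
          exact (ERealPos_mono hle).trans_eq (ERealPos_coe c)
      _ = _ := by simp
  have hpos : ∫⁻ ω, ERealPos (ℓ |X ω|) ∂P ≠ ⊤ := by
    intro htop
    have hfin : ∫⁻ ω, ERealPos (-(ℓ |X ω|)) ∂P ≠ ⊤ :=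
      (hneg.trans_lt ENNReal.ofReal_lt_top).ne
    rw [eexp, htop, ← EReal.coe_ennreal_toReal hfin, EReal.coe_ennreal_top,
      EReal.top_sub_coe] at h1
    exact lt_irrefl _ h1
  refine ⟨((measurable_pi_apply k).comp hm).aestronglyMeasurable, ?_⟩
  rw [hasFiniteIntegral_iff_norm]
  calc ∫⁻ ω, ENNReal.ofReal ‖X ω k‖ ∂P
      ≤ ∫⁻ ω, (ERealPos (ℓ |X ω|) + ENNReal.ofReal c) ∂P := by
        refine lintegral_mono fun ω => ?_
        have hk : |X ω k| ≤ ∑ k, |X ω k| :=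
          Finset.single_le_sum (f := fun k => |X ω k|) (fun _ _ => abs_nonneg _)
            (Finset.mem_univ k)
        calc ENNReal.ofReal ‖X ω k‖
            ≤ ENNReal.ofReal ((∑ k, |X ω k| - c) + c) :=
              ENNReal.ofReal_le_ofReal (by rw [Real.norm_eq_abs]; linarith)
          _ ≤ ENNReal.ofReal (∑ k, |X ω k| - c) + ENNReal.ofReal c := ENNReal.ofReal_add_le
          _ ≤ _ := by
              gcongr
              exact (ERealPos_coe _).symm.trans_le (ERealPos_mono (hlow ω))
    _ = ∫⁻ ω, ERealPos (ℓ |X ω|) ∂P + ENNReal.ofReal c := by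
        rw [lintegral_add_right _ measurable_const]; simp
    _ < ⊤ := ENNReal.add_lt_top.mpr ⟨hpos.lt_top, ENNReal.ofReal_lt_top⟩

lemma bddBelow_sum_acceptSet [IsProbabilityMeasure P] (hℓ : IsLossFunction ℓ c)
    (hX : MemOrliczHeart ℓ P X) :
    BddBelow {s : ℝ | ∃ m ∈ acceptSet ℓ P X, s = ∑ k, m k} := by
  refine ⟨∑ k, ∫ ω, X ω k ∂P - c, ?_⟩
  rintro s ⟨m, hm, rfl⟩
  have hint : Integrable (fun ω => ∑ k, X ω k) P :=
    integrable_finsetSum _ fun k _ => hX.integrable hℓ k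
  set h : Ω → ℝ := fun ω => ∑ k, X ω k - (∑ k, m k + c) with hh
  have hhint : Integrable h P := hint.sub (integrable_const _)
  have hlow : ∀ ω, ((h ω : ℝ) : EReal) ≤ ℓ (X ω - m) := fun ω => by
    have := hℓ.lower_bound (X ω - m)
    rw [← EReal.coe_sub] at this
    convert this using 2
    simp only [hh, Pi.sub_apply, Finset.sum_sub_distrib]
    ring
  have hm' := (eexp_nonpos_iff _).mp hm
  have hle : ∫⁻ ω, ENNReal.ofReal (h ω) ∂P ≤ ∫⁻ ω, ENNReal.ofReal (-h ω) ∂P := by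
    calc _ ≤ ∫⁻ ω, ERealPos (ℓ (X ω - m)) ∂P := lintegral_mono fun ω =>
          (ERealPos_coe _).symm.trans_le (ERealPos_mono (hlow ω))
      _ ≤ ∫⁻ ω, ERealPos (-(ℓ (X ω - m))) ∂P := hm'
      _ ≤ _ := lintegral_mono fun ω => by
          rw [← ERealPos_coe, EReal.coe_neg]
          exact ERealPos_mono (EReal.neg_le_neg_iff.mpr (hlow ω))
  have hI : ∫ ω, h ω ∂P ≤ 0 := by
    rw [integral_eq_lintegral_pos_part_sub_lintegral_neg_part hhint, sub_nonpos]
    refine ENNReal.toReal_mono ?_ hle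
    exact hhint.neg.lintegral_lt_top.ne
  rw [hh, integral_sub hint (integrable_const _),
    integral_finsetSum _ fun k _ => hX.integrable hℓ k] at hI
  simp only [integral_const, probReal_univ, one_smul] at hI
  linarith

lemma mem_acceptSet_add_iff (r m : Fin d → ℝ) :
    m ∈ acceptSet ℓ P (fun ω => X ω + r) ↔ m - r ∈ acceptSet ℓ P X := by
  simp only [acceptSet, Set.mem_ofPred_eq]
  have : ∀ ω, X ω + r - m = X ω - (m - r) := fun ω => by abel
  simp only [this]

lemma mem_acceptSet_smul_iff
    (hhom : ∀ t : ℝ, 0 < t → ∀ x : Fin d → ℝ, ℓ (t • x) = (t : EReal) * ℓ x)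
    {t : ℝ} (ht : 0 < t) (m : Fin d → ℝ) :
    m ∈ acceptSet ℓ P (fun ω => t • X ω) ↔ t⁻¹ • m ∈ acceptSet ℓ P X := by
  simp only [acceptSet, Set.mem_ofPred_eq]
  have : ∀ ω, t • X ω - m = t • (X ω - t⁻¹ • m) := fun ω => by
    rw [smul_sub, smul_inv_smul₀ ht.ne']
  simp only [this, hhom t ht, eexp_mul_nonpos_iff ht]

lemma shortfallRisk_add [IsProbabilityMeasure P] (hℓ : IsLossFunction ℓ c)
    (hX : MemOrliczHeart ℓ P X) (hne : (acceptSet ℓ P X).Nonempty) (r : Fin d → ℝ) :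
    shortfallRisk ℓ P (fun ω => X ω + r) = shortfallRisk ℓ P X + ∑ k, r k := by
  have hset : {s : ℝ | ∃ m ∈ acceptSet ℓ P (fun ω => X ω + r), s = ∑ k, m k} =
      {s : ℝ | ∃ m ∈ acceptSet ℓ P X, s = ∑ k, m k} + {∑ k, r k} := by
    ext s
    simp only [Set.add_singleton, Set.mem_image, Set.mem_ofPred_eq]
    constructor
    · rintro ⟨m, hm, rfl⟩
      exact ⟨_, ⟨m - r, (mem_acceptSet_add_iff r m).mp hm, rfl⟩, by simp⟩
    · rintro ⟨_, ⟨m, hm, rfl⟩, rfl⟩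
      exact ⟨m + r, (mem_acceptSet_add_iff r _).mpr (by simpa using hm),
        by simp [Finset.sum_add_distrib]⟩
  have hne' : {s : ℝ | ∃ m ∈ acceptSet ℓ P X, s = ∑ k, m k}.Nonempty := by
    obtain ⟨m, hm⟩ := hne
    exact ⟨_, m, hm, rfl⟩
  rw [shortfallRisk, hset, csInf_add hne' (bddBelow_sum_acceptSet hℓ hX)
    (Set.singleton_nonempty _) (bddBelow_singleton), csInf_singleton, shortfallRisk]

lemma shortfallRisk_smul
    (hhom : ∀ t : ℝ, 0 < t → ∀ x : Fin d → ℝ, ℓ (t • x) = (t : EReal) * ℓ x)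
    {t : ℝ} (ht : 0 < t) :
    shortfallRisk ℓ P (fun ω => t • X ω) = t * shortfallRisk ℓ P X := by
  have hset : {s : ℝ | ∃ m ∈ acceptSet ℓ P (fun ω => t • X ω), s = ∑ k, m k} =
      t • {s : ℝ | ∃ m ∈ acceptSet ℓ P X, s = ∑ k, m k} := by
    ext s
    simp only [Set.mem_smul_set, Set.mem_ofPred_eq]
    constructor
    · rintro ⟨m, hm, rfl⟩
      refine ⟨_, ⟨t⁻¹ • m, (mem_acceptSet_smul_iff hhom ht m).mp hm, rfl⟩, ?_⟩
      simp [← Finset.mul_sum, ht.ne']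
    · rintro ⟨_, ⟨m, hm, rfl⟩, rfl⟩
      exact ⟨t • m, (mem_acceptSet_smul_iff hhom ht _).mpr
        (by rwa [inv_smul_smul₀ ht.ne']), by simp [Finset.mul_sum]⟩
  rw [shortfallRisk, hset, Real.sInf_smul_of_nonneg ht.le, smul_eq_mul, shortfallRisk]

end

/-- Corollary 3.5: translation covariance and positive homogeneity of the unique
risk allocation. -/
theorem riskAllocation_translation_and_homogeneity
    {Ω : Type*} [MeasurableSpace Ω] (P : Measure Ω) [IsProbabilityMeasure P]
    {d : ℕ} (ℓ : (Fin d → ℝ) → EReal) (c : ℝ) (hℓ : IsLossFunction ℓ c)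
    (hperm : ∀ (π : Equiv.Perm (Fin d)) (x : Fin d → ℝ), ℓ (fun k => x (π k)) = ℓ x)
    (huniq : ∀ X : Ω → Fin d → ℝ, MemOrliczHeart ℓ P X →
      ∃! m : Fin d → ℝ, m ∈ acceptSet ℓ P X ∧ ∑ k, m k = shortfallRisk ℓ P X) :
    (∀ X : Ω → Fin d → ℝ, MemOrliczHeart ℓ P X → ∀ r : Fin d → ℝ,
      ∀ m m' : Fin d → ℝ,
        (m ∈ acceptSet ℓ P X ∧ ∑ k, m k = shortfallRisk ℓ P X) →
        (m' ∈ acceptSet ℓ P (fun ω => X ω + r) ∧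
          ∑ k, m' k = shortfallRisk ℓ P (fun ω => X ω + r)) →
        m' = m + r) ∧
    ((∀ t : ℝ, 0 < t → ∀ x : Fin d → ℝ, ℓ (t • x) = (t : EReal) * ℓ x) →
      ∀ X : Ω → Fin d → ℝ, MemOrliczHeart ℓ P X → ∀ lam : ℝ, 0 < lam →
        ∀ m m' : Fin d → ℝ,
          (m ∈ acceptSet ℓ P X ∧ ∑ k, m k = shortfallRisk ℓ P X) →
          (m' ∈ acceptSet ℓ P (fun ω => lam • X ω) ∧
            ∑ k, m' k = shortfallRisk ℓ P (fun ω => lam • X ω)) →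
          m' = lam • m) := by
  refine ⟨fun X hX r m m' hm hm' => ?_, fun hhom X hX lam hlam m m' hm hm' => ?_⟩
  · have key : m' - r = m := by
      refine (huniq X hX).unique ⟨(mem_acceptSet_add_iff r m').mp hm'.1, ?_⟩ hm
      have h := hm'.2
      rw [shortfallRisk_add hℓ hX ⟨m, hm.1⟩ r] at h
      simp [Finset.sum_sub_distrib, h]
    rw [← key, sub_add_cancel]
  · have key : lam⁻¹ • m' = m := by
      refine (huniq X hX).unique ⟨(mem_acceptSet_smul_iff hhom hlam m').mp hm'.1, ?_⟩ hm
      have h := hm'.2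
      rw [shortfallRisk_smul hhom hlam] at h
      simp [← Finset.mul_sum, h, hlam.ne']
    rw [← key, smul_inv_smul₀ hlam.ne']
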